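/- Let $2<p<\infty$ and $1\le q\le p$. Let $(\beta_k)_{k\in\mathbb{Z}}$ be a family of functions in $L^1(\mathbb{R}^d)$ with $\sup_k \|\beta_k\|_{L^1}\le A$ and $\sup_{\xi}\sum_{k\in\mathbb{Z}}|\widehat{\beta_k}(\xi)|\le B$. Then for every $f$, $\big(\sum_k \|\beta_k * f\|_{L^{p,q}}^p\big)^{1/p} \le C(p,q,A,B)\, \|f\|_{L^{p,q}}$. -/

import Mathlib

open MeasureTheory ENNReal
open scoped FourierTransform Convolution

/-- A dyadic version of the Lorentz space quasi-norm `‖f‖_{L^{p,q}(μ)}` (here `q < ∞`). -/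
noncomputable def lorentzNorm {α : Type*} [MeasurableSpace α] (μ : Measure α)
    (p q : ℝ) {E : Type*} [NormedAddCommGroup E] (f : α → E) : ℝ≥0∞ :=
  (∑' m : ℤ, ((2 : ℝ≥0∞) ^ m) ^ q *
    (μ {x | (2 : ℝ) ^ m < ‖f x‖}) ^ (q / p)) ^ (1 / q)

theorem ENNReal.rpow_tsum_le_tsum_rpow {ι : Type*} (a : ι → ℝ≥0∞) {s : ℝ} (hs : 0 < s)
    (hs1 : s ≤ 1) : (∑' i, a i) ^ s ≤ ∑' i, a i ^ s := by
  have hlim := ((ENNReal.continuous_rpow_const (y := s)).tendsto _).comp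
    (ENNReal.summable (f := a)).hasSum
  refine le_of_tendsto' hlim fun t ↦ ?_
  refine le_trans ?_ (ENNReal.sum_le_tsum t)
  exact Finset.le_sum_of_subadditive (fun x : ℝ≥0∞ ↦ x ^ s) (ENNReal.zero_rpow_of_pos hs).le
    (fun x y ↦ ENNReal.rpow_add_le_add_rpow x y hs.le hs1) t a

theorem ENNReal.Lp_finsetSum_le {ι κ : Type*} (K : Finset κ) (t : Finset ι) (G : ι → κ → ℝ≥0∞)
    {r : ℝ} (hr : 1 ≤ r) :
    (∑ k ∈ K, (∑ m ∈ t, G m k) ^ r) ^ (1 / r) ≤ ∑ m ∈ t, (∑ k ∈ K, G m k ^ r) ^ (1 / r) := by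
  have hr0 : 0 < r := by linarith
  have h := Finset.le_sum_of_subadditive
    (fun g : κ → ℝ≥0∞ ↦ (∑ k ∈ K, g k ^ r) ^ (1 / r)) ?_ ?_ t G
  · simpa using h
  · simp [ENNReal.zero_rpow_of_pos hr0, hr0]
  · intro f g
    exact ENNReal.Lp_add_le K f g hr

/-- Minkowski's inequality for double series in `ℝ≥0∞`. -/
theorem ENNReal.tsum_rpow_tsum_le {ι κ : Type*} (G : ι → κ → ℝ≥0∞) {r : ℝ} (hr : 1 ≤ r) :
    ∑' k, (∑' m, G m k) ^ r ≤ (∑' m, (∑' k, G m k ^ r) ^ (1 / r)) ^ r := by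
  have hr0 : 0 < r := by linarith
  rw [ENNReal.tsum_eq_iSup_sum]
  refine iSup_le fun K ↦ ?_
  have hlim : Filter.Tendsto (fun t : Finset ι ↦ ∑ k ∈ K, (∑ m ∈ t, G m k) ^ r) Filter.atTop
      (nhds (∑ k ∈ K, (∑' m, G m k) ^ r)) :=
    tendsto_finsetSum _ fun k _ ↦ ((ENNReal.continuous_rpow_const (y := r)).tendsto _).comp
      (ENNReal.summable (f := fun m ↦ G m k)).hasSum
  refine le_of_tendsto' hlim fun t ↦ ?_
  rw [← ENNReal.rpow_inv_le_iff hr0, ← one_div]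
  refine (ENNReal.Lp_finsetSum_le K t G hr).trans ?_
  refine le_trans ?_ (ENNReal.sum_le_tsum t)
  gcongr
  exact ENNReal.sum_le_tsum K

theorem ENNReal.tsum_sq_le_sq_tsum {ι : Type*} (a : ι → ℝ≥0∞) :
    ∑' i, a i ^ 2 ≤ (∑' i, a i) ^ 2 := by
  rw [sq (∑' i, a i), ← ENNReal.tsum_mul_right]
  refine ENNReal.tsum_le_tsum fun i ↦ ?_
  rw [sq]
  gcongr
  exact ENNReal.le_tsum i

section Fourier

variable {E : Type*} [NormedAddCommGroup E] [InnerProductSpace ℝ E] [FiniteDimensional ℝ E]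
  [MeasurableSpace E] [BorelSpace E]

open SchwartzMap

theorem ae_eq_of_integral_schwartz_mul_eq {u v : E → ℂ} (hu : LocallyIntegrable u)
    (hv : LocallyIntegrable v) (h : ∀ φ : 𝓢(E, ℂ), ∫ x, φ x * u x = ∫ x, φ x * v x) :
    u =ᵐ[volume] v := by
  refine ae_eq_of_integral_contDiff_smul_eq hu hv fun g hg hgc ↦ ?_
  have hc : HasCompactSupport (fun x ↦ (g x : ℂ)) := hgc.comp_left (g := ((↑) : ℝ → ℂ)) rfl
  have hs : ContDiff ℝ ((⊤ : ℕ∞) : WithTop ℕ∞) (fun x ↦ (g x : ℂ)) :=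
    Complex.ofRealCLM.contDiff.comp hg
  simpa using h (hc.toSchwartzMap hs)

theorem integral_schwartz_fourier_mul_eq {h : E → ℂ} (hh : Integrable h) (φ : 𝓢(E, ℂ)) :
    ∫ x, 𝓕 φ x * h x = ∫ x, φ x * 𝓕 h x := by
  simpa using! VectorFourier.integral_bilin_fourierIntegral_eq_flip (ContinuousLinearMap.mul ℂ ℂ)
    (L := innerₗ E) Real.continuous_fourierChar continuous_inner φ.integrable hh

theorem continuous_fourier_of_integrable {h : E → ℂ} (hh : Integrable h) : Continuous (𝓕 h) :=
  VectorFourier.fourierIntegral_continuous Real.continuous_fourierChar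
    (innerSL ℝ).continuous₂ hh

theorem L2_integral_schwartz_mul_fourier (f : Lp (α := E) ℂ 2) (φ : 𝓢(E, ℂ)) :
    ∫ x, φ x * (𝓕 f : Lp (α := E) ℂ 2) x = ∫ x, 𝓕 φ x * f x := by
  have h := congrArg (fun T ↦ T φ) (Lp.fourier_toTemperedDistribution_eq f)
  simpa [Lp.toTemperedDistribution_apply] using h.symm

/-- Plancherel's identity for the Fourier integral of a function in `L¹ ∩ L²`. -/
theorem eLpNorm_fourier_eq_of_memLp {g : E → ℂ} (hg : Integrable g) (hg2 : MemLp g 2) :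
    eLpNorm (𝓕 g) 2 = eLpNorm g 2 := by
  have hae : ((𝓕 (hg2.toLp g) : Lp ℂ 2 (volume : Measure E)) : E → ℂ) =ᵐ[volume] 𝓕 g := by
    refine ae_eq_of_integral_schwartz_mul_eq ((Lp.memLp _).locallyIntegrable (by norm_num))
      (continuous_fourier_of_integrable hg).locallyIntegrable fun φ ↦ ?_
    rw [L2_integral_schwartz_mul_fourier, ← integral_schwartz_fourier_mul_eq hg]
    refine integral_congr_ae ?_
    filter_upwards [hg2.coeFn_toLp] with x hx
    rw [hx]
  rw [← eLpNorm_congr_ae hae, ← eLpNorm_congr_ae hg2.coeFn_toLp, ← Lp.enorm_def, ← Lp.enorm_def,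
    ← ofReal_norm, ← ofReal_norm, Lp.norm_fourier_eq]

/-- An integrable function whose Fourier integral is in `L²` satisfies Plancherel's identity. -/
theorem eLpNorm_eq_of_memLp_fourier {h : E → ℂ} (hh : Integrable h) (hh2 : MemLp (𝓕 h) 2) :
    eLpNorm h 2 = eLpNorm (𝓕 h) 2 := by
  set v : Lp ℂ 2 (volume : Measure E) := 𝓕⁻ (hh2.toLp)
  have hv : 𝓕 v = hh2.toLp := FourierTransform.fourier_fourierInv_eq _
  have hae : (v : E → ℂ) =ᵐ[volume] h := by
    refine ae_eq_of_integral_schwartz_mul_eq ((Lp.memLp _).locallyIntegrable (by norm_num))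
      hh.locallyIntegrable fun φ ↦ ?_
    have hφ : 𝓕 (𝓕⁻ φ) = φ := FourierTransform.fourier_fourierInv_eq _
    rw [← hφ, ← L2_integral_schwartz_mul_fourier, integral_schwartz_fourier_mul_eq hh, hv]
    refine integral_congr_ae ?_
    filter_upwards [hh2.coeFn_toLp] with x hx
    rw [hx]
  rw [← eLpNorm_congr_ae hae, ← eLpNorm_congr_ae hh2.coeFn_toLp, ← Lp.enorm_def, ← Lp.enorm_def,
    ← ofReal_norm, ← ofReal_norm, ← hv, Lp.norm_fourier_eq]

theorem lintegral_sq_eq_eLpNorm_sq (g : E → ℂ) :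
    ∫⁻ x, ‖g x‖ₑ ^ 2 = eLpNorm g 2 volume ^ 2 := by
  simpa using (eLpNorm_nnreal_pow_eq_lintegral (f := g) (μ := volume) (p := 2) (by simp)).symm

/-- The `L² → ℓ²(L²)` almost orthogonality bound. -/
theorem tsum_lintegral_convolution_sq_le {ι : Type*} [Countable ι] {β : ι → E → ℂ}
    (hβ : ∀ k, Integrable (β k))
    {b : ℝ≥0∞} (hb : b ≠ ∞) (hB : ∀ ξ, ∑' k, ‖𝓕 (β k) ξ‖ₑ ≤ b) {g : E → ℂ} (hg : Integrable g)
    (hg2 : MemLp g 2) :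
    ∑' k, ∫⁻ x, ‖(β k ⋆[ContinuousLinearMap.mul ℂ ℂ] g) x‖ₑ ^ 2 ≤
      b ^ 2 * ∫⁻ x, ‖g x‖ₑ ^ 2 := by
  have hgF := eLpNorm_fourier_eq_of_memLp hg hg2
  have hcF := continuous_fourier_of_integrable hg
  have hconv : ∀ k, 𝓕 (β k ⋆[ContinuousLinearMap.mul ℂ ℂ] g) = fun ξ ↦ 𝓕 (β k) ξ * 𝓕 g ξ :=
    fun k ↦ funext fun ξ ↦ Real.fourier_mul_convolution_eq (hβ k) hg ξ
  have hle : ∀ k ξ, ‖𝓕 (β k) ξ‖ₑ ≤ b := fun k ξ ↦ (ENNReal.le_tsum k).trans (hB ξ)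
  have hk : ∀ k, ∫⁻ x, ‖(β k ⋆[ContinuousLinearMap.mul ℂ ℂ] g) x‖ₑ ^ 2 =
      ∫⁻ ξ, ‖𝓕 (β k) ξ‖ₑ ^ 2 * ‖𝓕 g ξ‖ₑ ^ 2 := by
    intro k
    have hint : Integrable (β k ⋆[ContinuousLinearMap.mul ℂ ℂ] g) :=
      (hβ k).integrable_convolution _ hg
    have hmem : MemLp (𝓕 (β k ⋆[ContinuousLinearMap.mul ℂ ℂ] g)) 2 := by
      have hgm : MemLp (𝓕 g) 2 := ⟨hcF.aestronglyMeasurable, hgF ▸ hg2.2⟩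
      refine hgm.of_le_mul (c := b.toReal)
        (continuous_fourier_of_integrable hint).aestronglyMeasurable (.of_forall fun ξ ↦ ?_)
      rw [hconv, norm_mul]
      gcongr
      simpa using ENNReal.toReal_mono hb (hle k ξ)
    rw [lintegral_sq_eq_eLpNorm_sq, eLpNorm_eq_of_memLp_fourier hint hmem,
      ← lintegral_sq_eq_eLpNorm_sq, hconv]
    simp [enorm_mul, mul_pow]
  calc ∑' k, ∫⁻ x, ‖(β k ⋆[ContinuousLinearMap.mul ℂ ℂ] g) x‖ₑ ^ 2
      = ∫⁻ ξ, ∑' k, ‖𝓕 (β k) ξ‖ₑ ^ 2 * ‖𝓕 g ξ‖ₑ ^ 2 := by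
        rw [lintegral_tsum]
        · exact tsum_congr hk
        · intro k
          have := continuous_fourier_of_integrable (hβ k)
          exact Measurable.aemeasurable (by fun_prop)
    _ ≤ ∫⁻ ξ, b ^ 2 * ‖𝓕 g ξ‖ₑ ^ 2 := by
        refine lintegral_mono fun ξ ↦ ?_
        rw [ENNReal.tsum_mul_right]
        gcongr
        exact (ENNReal.tsum_sq_le_sq_tsum _).trans (pow_le_pow_left' (hB ξ) 2)
    _ = b ^ 2 * ∫⁻ x, ‖g x‖ₑ ^ 2 := by
        rw [lintegral_const_mul _ (by fun_prop), lintegral_sq_eq_eLpNorm_sq, hgF,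
          lintegral_sq_eq_eLpNorm_sq]

theorem norm_convolution_mul_le {β l : E → ℂ} (hβ : Integrable β) {τ : ℝ} (hl : ∀ x, ‖l x‖ ≤ τ)
    (x : E) : ‖(β ⋆[ContinuousLinearMap.mul ℂ ℂ] l) x‖ ≤ (∫ y, ‖β y‖) * τ := by
  rw [convolution_def, ← integral_mul_const]
  refine norm_integral_le_of_norm_le (hβ.norm.mul_const τ) (.of_forall fun t ↦ ?_)
  simp only [ContinuousLinearMap.mul_apply', norm_mul]
  gcongr
  exact hl _

theorem integrable_of_memLp_two_of_lt_norm {g : E → ℂ} (hg2 : MemLp g 2) {τ : ℝ} (hτ : 0 < τ)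
    (h : ∀ x, g x ≠ 0 → τ < ‖g x‖) : Integrable g := by
  have h2 : Integrable (fun x ↦ ‖g x‖ ^ 2) := by
    simpa using hg2.integrable_norm_pow (by norm_num)
  refine (h2.const_mul τ⁻¹).mono' hg2.1 (.of_forall fun x ↦ ?_)
  by_cases hx : g x = 0
  · simp [hx]
  · have := h x hx
    rw [inv_mul_eq_div, le_div_iff₀ hτ, sq]
    gcongr

/-- Joint distributional estimate for the convolutions `β k ⋆ f`: the part of `f` below height `τ`
is handled by the `L^∞` bound and the part above it by the `L²` bound. -/
theorem tsum_distribution_convolution_le {ι : Type*} [Countable ι] {β : ι → E → ℂ}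
    (hβ : ∀ k, Integrable (β k)) {A : ℝ} (hA : ∀ k, (∫ x, ‖β k x‖) ≤ A)
    {b : ℝ≥0∞} (hb0 : b ≠ 0) (hb : b ≠ ∞) (hB : ∀ ξ, ∑' k, ‖𝓕 (β k) ξ‖ₑ ≤ b) {f : E → ℂ}
    (hf : Measurable f) {s τ : ℝ} (hτ : 0 < τ) (hs : A * τ ≤ s) :
    ENNReal.ofReal s ^ 2 *
        ∑' k, volume {x | 2 * s < ‖(β k ⋆[ContinuousLinearMap.mul ℂ ℂ] f) x‖} ≤
      b ^ 2 * ∫⁻ x in {x | τ < ‖f x‖}, ‖f x‖ₑ ^ 2 := by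
  set S : Set E := {x | τ < ‖f x‖}
  have hS : MeasurableSet S := measurableSet_lt measurable_const hf.norm
  set g : E → ℂ := S.indicator f
  set l : E → ℂ := Sᶜ.indicator f
  have hgm : Measurable g := hf.indicator hS
  have hlm : Measurable l := hf.indicator hS.compl
  have hgl : f = l + g := (Set.indicator_compl_add_self S f).symm
  have hl : ∀ x, ‖l x‖ ≤ τ := by
    intro x
    by_cases hx : x ∈ S
    · simp [l, hx, hτ.le]
    · simpa [l, hx] using not_lt.1 hx
  have hgt : ∀ x, g x ≠ 0 → τ < ‖g x‖ := by
    intro x hx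
    have hxS : x ∈ S := Set.mem_of_indicator_ne_zero hx
    rw [show g x = f x from Set.indicator_of_mem hxS f]
    exact hxS
  have hint : ∫⁻ x in S, ‖f x‖ₑ ^ 2 = ∫⁻ x, ‖g x‖ₑ ^ 2 := by
    rw [← lintegral_indicator hS]
    refine lintegral_congr fun x ↦ ?_
    by_cases hx : x ∈ S <;> simp [g, hx]
  rw [hint]
  by_cases htop : ∫⁻ x, ‖g x‖ₑ ^ 2 = ∞
  · simp [htop, hb0, ENNReal.mul_top]
  have hg2 : MemLp g 2 := by
    refine ⟨hgm.aestronglyMeasurable, ?_⟩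
    rw [lintegral_sq_eq_eLpNorm_sq] at htop
    exact lt_top_iff_ne_top.2 fun h ↦ htop (by simp [h])
  have hg1 : Integrable g := integrable_of_memLp_two_of_lt_norm hg2 hτ hgt
  refine le_trans ?_ (tsum_lintegral_convolution_sq_le hβ hb hB hg1 hg2)
  rw [← ENNReal.tsum_mul_left]
  refine ENNReal.tsum_le_tsum fun k ↦ ?_
  have hci : Integrable (β k ⋆[ContinuousLinearMap.mul ℂ ℂ] g) :=
    (hβ k).integrable_convolution _ hg1
  refine le_trans ?_ (mul_meas_ge_le_lintegral₀ (hci.1.enorm.pow_const 2) (ENNReal.ofReal s ^ 2))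
  refine mul_le_mul_right (measure_mono_ae ?_) _
  filter_upwards [(hβ k).ae_convolution_exists (ContinuousLinearMap.mul ℂ ℂ) hg1] with x hx hlt
  have hlx : ConvolutionExistsAt (β k) l x (ContinuousLinearMap.mul ℂ ℂ) volume := by
    have hm : AEStronglyMeasurable (fun t ↦ l (x - t)) volume :=
      (hlm.comp (measurable_const.sub measurable_id)).aestronglyMeasurable
    exact (hβ k).mul_bdd hm (.of_forall fun t ↦ hl _)
  have hadd : (β k ⋆[ContinuousLinearMap.mul ℂ ℂ] f) x =
      (β k ⋆[ContinuousLinearMap.mul ℂ ℂ] l) x + (β k ⋆[ContinuousLinearMap.mul ℂ ℂ] g) x := by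
    rw [hgl]
    exact hlx.distrib_add hx
  have h1 := norm_convolution_mul_le (hβ k) hl x
  have h2 : (∫ y, ‖β k y‖) * τ ≤ A * τ := by gcongr; exact hA k
  have h3 := norm_add_le ((β k ⋆[ContinuousLinearMap.mul ℂ ℂ] l) x)
    ((β k ⋆[ContinuousLinearMap.mul ℂ ℂ] g) x)
  rw [← hadd] at h3
  have h4 : 2 * s < ‖(β k ⋆[ContinuousLinearMap.mul ℂ ℂ] f) x‖ := hlt
  have h5 : s ≤ ‖(β k ⋆[ContinuousLinearMap.mul ℂ ℂ] g) x‖ := by linarith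
  refine pow_le_pow_left' ?_ 2
  rw [← ofReal_norm]
  exact ENNReal.ofReal_le_ofReal h5

end Fourier

theorem ENNReal.ofReal_two_zpow (m : ℤ) : ENNReal.ofReal ((2 : ℝ) ^ m) = 2 ^ m := by
  obtain ⟨k, rfl | rfl⟩ := m.eq_nat_or_neg
  · simp [ENNReal.ofReal_pow]
  · simp [ENNReal.ofReal_inv_of_pos, ENNReal.ofReal_pow, zpow_neg, ENNReal.zpow_neg]

theorem enorm_sq_le_tsum_indicator {α E : Type*} [NormedAddCommGroup E] (f : α → E) (M : ℤ) (x : α)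
    (hx : (2 : ℝ) ^ M < ‖f x‖) :
    ‖f x‖ₑ ^ 2 ≤ ∑' i : ℕ, {y | (2 : ℝ) ^ (M + i) < ‖f y‖}.indicator
      (fun _ ↦ 4 * ((2 : ℝ≥0∞) ^ (M + i)) ^ 2) x := by
  have hpos : 0 < ‖f x‖ := lt_trans (by positivity) hx
  obtain ⟨j, hj1, hj2⟩ := exists_mem_Ioc_zpow hpos (one_lt_two (α := ℝ))
  have hMj : M ≤ j := by
    have := (zpow_lt_zpow_iff_right₀ (one_lt_two (α := ℝ))).1 (hx.trans_le hj2)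
    omega
  obtain ⟨i, rfl⟩ := Int.le.dest hMj
  refine le_trans ?_ (ENNReal.le_tsum i)
  rw [Set.indicator_of_mem (by exact hj1)]
  calc ‖f x‖ₑ ^ 2 ≤ (2 ^ (M + i + 1)) ^ 2 := by
        gcongr
        rw [← ofReal_norm, ← ENNReal.ofReal_two_zpow]
        exact ENNReal.ofReal_le_ofReal hj2
    _ = 4 * ((2 : ℝ≥0∞) ^ (M + i)) ^ 2 := by
        rw [ENNReal.zpow_add (by norm_num) (by norm_num), zpow_one]
        ring

theorem setLIntegral_enorm_sq_le_tsum {α E : Type*} [MeasurableSpace α] {μ : Measure α}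
    [NormedAddCommGroup E] [MeasurableSpace E] [OpensMeasurableSpace E] {f : α → E}
    (hf : Measurable f) (M : ℤ) :
    ∫⁻ x in {x | (2 : ℝ) ^ M < ‖f x‖}, ‖f x‖ₑ ^ 2 ∂μ ≤
      ∑' i : ℕ, 4 * ((2 : ℝ≥0∞) ^ (M + i)) ^ 2 * μ {x | (2 : ℝ) ^ (M + i) < ‖f x‖} := by
  have hS : ∀ j : ℤ, MeasurableSet {x | (2 : ℝ) ^ j < ‖f x‖} := fun j ↦
    measurableSet_lt measurable_const hf.norm
  calc ∫⁻ x in {x | (2 : ℝ) ^ M < ‖f x‖}, ‖f x‖ₑ ^ 2 ∂μ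
      ≤ ∫⁻ x in {x | (2 : ℝ) ^ M < ‖f x‖}, ∑' i : ℕ, {y | (2 : ℝ) ^ (M + i) < ‖f y‖}.indicator
          (fun _ ↦ 4 * ((2 : ℝ≥0∞) ^ (M + i)) ^ 2) x ∂μ :=
        setLIntegral_mono' (hS M) fun x hx ↦ enorm_sq_le_tsum_indicator f M x hx
    _ ≤ ∫⁻ x, ∑' i : ℕ, {y | (2 : ℝ) ^ (M + i) < ‖f y‖}.indicator
          (fun _ ↦ 4 * ((2 : ℝ≥0∞) ^ (M + i)) ^ 2) x ∂μ := setLIntegral_le_lintegral _ _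
    _ = _ := by
        rw [lintegral_tsum fun i ↦ (measurable_const.indicator (hS _)).aemeasurable]
        exact tsum_congr fun i ↦ lintegral_indicator_const (hS _) _

theorem tsum_zpow_rpow_mul_shift (ν : ℤ → ℝ≥0∞) (q : ℝ) (j : ℤ) :
    ∑' m : ℤ, ((2 : ℝ≥0∞) ^ m) ^ q * ν (m + j) =
      ((2 : ℝ≥0∞) ^ (-j)) ^ q * ∑' m : ℤ, ((2 : ℝ≥0∞) ^ m) ^ q * ν m := by
  rw [← (Equiv.addRight (-j)).tsum_eq, ← ENNReal.tsum_mul_left]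
  refine tsum_congr fun m ↦ ?_
  have h2 : (2 : ℝ≥0∞) ^ (m + -j) = 2 ^ (-j) * 2 ^ m := by
    rw [ENNReal.zpow_add (by norm_num) (by norm_num), mul_comm]
  rw [Equiv.coe_addRight, neg_add_cancel_right, h2,
    ENNReal.mul_rpow_of_ne_top (by simp [ENNReal.zpow_ne_top])
      (by simp [ENNReal.zpow_ne_top]), mul_assoc]

theorem tsum_dyadic_rpow_le {lam ν : ℤ → ℝ≥0∞} {D : ℝ≥0∞} {n : ℤ} {q σ : ℝ} (hσ : 0 < σ)
    (hσ1 : σ ≤ 1) (h : ∀ m, lam m ≤ D * ∑' i : ℕ, ((2 : ℝ≥0∞) ^ i) ^ 2 * ν (m + (i - n))) :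
    ∑' m : ℤ, ((2 : ℝ≥0∞) ^ m) ^ q * lam m ^ σ ≤
      D ^ σ * (∑' i : ℕ, (((2 : ℝ≥0∞) ^ i) ^ 2) ^ σ * ((2 : ℝ≥0∞) ^ (-(i - n) : ℤ)) ^ q) *
        ∑' m : ℤ, ((2 : ℝ≥0∞) ^ m) ^ q * ν m ^ σ := by
  calc ∑' m : ℤ, ((2 : ℝ≥0∞) ^ m) ^ q * lam m ^ σ
      ≤ ∑' m : ℤ, ∑' i : ℕ, D ^ σ * ((((2 : ℝ≥0∞) ^ i) ^ 2) ^ σ *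
          (((2 : ℝ≥0∞) ^ m) ^ q * ν (m + (i - n)) ^ σ)) := by
        refine ENNReal.tsum_le_tsum fun m ↦ ?_
        calc ((2 : ℝ≥0∞) ^ m) ^ q * lam m ^ σ
            ≤ ((2 : ℝ≥0∞) ^ m) ^ q * (D ^ σ *
                ∑' i : ℕ, (((2 : ℝ≥0∞) ^ i) ^ 2 * ν (m + (i - n))) ^ σ) := by
              gcongr
              refine (ENNReal.rpow_le_rpow (h m) hσ.le).trans ?_
              rw [ENNReal.mul_rpow_of_nonneg _ _ hσ.le]
              gcongr
              exact ENNReal.rpow_tsum_le_tsum_rpow _ hσ hσ1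
          _ = _ := by
              rw [← ENNReal.tsum_mul_left, ← ENNReal.tsum_mul_left]
              refine tsum_congr fun i ↦ ?_
              rw [ENNReal.mul_rpow_of_nonneg _ _ hσ.le]
              ring
    _ = _ := by
        rw [ENNReal.tsum_comm, mul_assoc, ← ENNReal.tsum_mul_right, ← ENNReal.tsum_mul_left]
        refine tsum_congr fun i ↦ ?_
        rw [ENNReal.tsum_mul_left, ENNReal.tsum_mul_left,
          tsum_zpow_rpow_mul_shift (fun m ↦ ν m ^ σ)]
        ring

theorem tsum_dyadic_weight_ne_top (n : ℤ) {q σ : ℝ} (h : 2 * σ < q) :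
    ∑' i : ℕ, (((2 : ℝ≥0∞) ^ i) ^ 2) ^ σ * ((2 : ℝ≥0∞) ^ (-(i - n) : ℤ)) ^ q ≠ ∞ := by
  have hterm : ∀ i : ℕ, (((2 : ℝ≥0∞) ^ i) ^ 2) ^ σ * ((2 : ℝ≥0∞) ^ (-(i - n) : ℤ)) ^ q =
      (2 : ℝ≥0∞) ^ (n * q) * ((2 : ℝ≥0∞) ^ (2 * σ - q)) ^ i := by
    intro i
    simp only [← ENNReal.rpow_natCast, ← ENNReal.rpow_intCast, ← ENNReal.rpow_mul]
    rw [← ENNReal.rpow_add _ _ (by norm_num) (by norm_num),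
      ← ENNReal.rpow_add _ _ (by norm_num) (by norm_num)]
    congr 1
    push_cast
    ring
  rw [tsum_congr hterm, ENNReal.tsum_mul_left, ENNReal.tsum_geometric]
  refine ENNReal.mul_ne_top (ENNReal.rpow_ne_top_of_ne_zero (by norm_num) (by norm_num)) ?_
  rw [ENNReal.inv_ne_top]
  have : (2 : ℝ≥0∞) ^ (2 * σ - q) < 1 :=
    ENNReal.rpow_lt_one_of_one_lt_of_neg (by norm_num) (by linarith)
  exact (tsub_pos_of_lt this).ne'

/-- Since `q ≤ p`, the space `L^{p,q}` of the disjoint union embeds in `ℓ^p(L^{p,q})`. -/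
theorem tsum_lorentzNorm_rpow_le {ι α E : Type*} [MeasurableSpace α] (μ : Measure α) {p q : ℝ}
    (hq : 0 < q) (hqp : q ≤ p) [NormedAddCommGroup E] (F : ι → α → E) :
    (∑' k, lorentzNorm μ p q (F k) ^ p) ^ (1 / p) ≤
      (∑' m : ℤ, ((2 : ℝ≥0∞) ^ m) ^ q *
        (∑' k, μ {x | (2 : ℝ) ^ m < ‖F k x‖}) ^ (q / p)) ^ (1 / q) := by
  have hp : 0 < p := hq.trans_le hqp
  have hr : 1 ≤ p / q := (one_le_div hq).2 hqp
  have hmink := ENNReal.tsum_rpow_tsum_le (fun (m : ℤ) k ↦ ((2 : ℝ≥0∞) ^ m) ^ q *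
    (μ {x | (2 : ℝ) ^ m < ‖F k x‖}) ^ (q / p)) hr
  have h := ENNReal.rpow_le_rpow hmink (z := 1 / p) (by positivity)
  rw [← ENNReal.rpow_mul, show p / q * (1 / p) = 1 / q by field_simp] at h
  simp only [lorentzNorm, ← ENNReal.rpow_mul]
  rw [show 1 / q * p = p / q by ring]
  refine h.trans_eq ?_
  congr 1
  refine tsum_congr fun m ↦ ?_
  have e1 : q / p * (p / q) = 1 := by field_simp
  have e2 : p / q * (1 / (p / q)) = 1 := by field_simp
  simp only [ENNReal.mul_rpow_of_nonneg _ _ (zero_le_one.trans hr)]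
  rw [ENNReal.tsum_mul_left, ENNReal.mul_rpow_of_nonneg _ _ (by positivity), ← ENNReal.rpow_mul,
    e2, ENNReal.rpow_one]
  simp only [← ENNReal.rpow_mul, e1, ENNReal.rpow_one]
  rw [show 1 / (p / q) = q / p by field_simp]

/-- Dual almost orthogonality: if `sup_k ‖β_k‖_{L¹} ≤ A` and `sup_ξ Σ_k |β̂_k(ξ)| ≤ B`,
then `(Σ_k ‖β_k * f‖_{L^{p,q}}^p)^{1/p} ≤ C ‖f‖_{L^{p,q}}` for `2 < p < ∞`, `1 ≤ q ≤ p`. -/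
theorem statement1 (d : ℕ) (hd : 1 ≤ d) (p q : ℝ) (hp1 : 2 < p) (hq1 : 1 ≤ q)
    (hqp : q ≤ p) (A B : ℝ) :
    ∃ C : ℝ, 0 < C ∧
      ∀ (β : ℤ → EuclideanSpace ℝ (Fin d) → ℂ),
        (∀ k, Integrable (β k)) →
        (∀ k, (∫ x, ‖β k x‖) ≤ A) →
        (∀ ξ, (∑' k : ℤ, (‖𝓕 (β k) ξ‖₊ : ℝ≥0∞)) ≤ ENNReal.ofReal B) →
        ∀ f : EuclideanSpace ℝ (Fin d) → ℂ, Measurable f →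
          (∑' k : ℤ,
              (lorentzNorm volume p q (β k ⋆[ContinuousLinearMap.mul ℂ ℂ] f)) ^ p) ^ (1 / p) ≤
            ENNReal.ofReal C * lorentzNorm volume p q f := by
  have hq : 0 < q := by linarith
  have hp : 0 < p := by linarith
  have hσ : 0 < q / p := by positivity
  have hσ1 : q / p ≤ 1 := (div_le_one hp).2 hqp
  have hσq : 2 * (q / p) < q := by
    rw [← mul_div_assoc, div_lt_iff₀ hp, mul_comm]
    gcongr
  obtain ⟨n, hn⟩ := pow_unbounded_of_one_lt (2 * A) (one_lt_two (α := ℝ))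
  set b : ℝ≥0∞ := ENNReal.ofReal B + 1
  have hb0 : b ≠ 0 := by simp [b]
  have hb : b ≠ ∞ := by simp [b]
  set D : ℝ≥0∞ := 4 * b ^ 2 * (2 ^ (1 - (n : ℤ))) ^ 2
  have hD : D ≠ ∞ := by
    have : (2 : ℝ≥0∞) ^ (1 - (n : ℤ)) ≠ ∞ := ENNReal.zpow_ne_top (by norm_num) (by norm_num) _
    finiteness
  set K : ℝ≥0∞ := D ^ (q / p) * ∑' i : ℕ, (((2 : ℝ≥0∞) ^ i) ^ 2) ^ (q / p) *
    ((2 : ℝ≥0∞) ^ (-(i - (n : ℤ)) : ℤ)) ^ q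
  have hK : K ≠ ∞ := ENNReal.mul_ne_top (ENNReal.rpow_ne_top_of_nonneg hσ.le hD)
    (tsum_dyadic_weight_ne_top n hσq)
  have hKq : K ^ (1 / q) ≠ ∞ := ENNReal.rpow_ne_top_of_nonneg (by positivity) hK
  refine ⟨(K ^ (1 / q)).toReal + 1, by positivity, fun β hβ hA hB f hf ↦ ?_⟩
  have hB' : ∀ ξ, ∑' k, ‖𝓕 (β k) ξ‖ₑ ≤ b := fun ξ ↦ (hB ξ).trans le_self_add
  have hlam : ∀ m : ℤ,
      ∑' k, volume {x | (2 : ℝ) ^ m < ‖(β k ⋆[ContinuousLinearMap.mul ℂ ℂ] f) x‖} ≤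
        D * ∑' i : ℕ, ((2 : ℝ≥0∞) ^ i) ^ 2 *
          volume {x | (2 : ℝ) ^ (m + (i - (n : ℤ))) < ‖f x‖} := by
    intro m
    have hs : A * (2 : ℝ) ^ (m - n) ≤ 2 ^ (m - 1) := by
      rw [zpow_sub₀ two_ne_zero, zpow_sub₀ two_ne_zero, zpow_natCast, zpow_one, ← mul_div_assoc,
        div_le_div_iff₀ (by positivity) (by norm_num)]
      nlinarith [zpow_pos (two_pos (α := ℝ)) m]
    have h := (tsum_distribution_convolution_le hβ hA hb0 hb hB' hf (by positivity) hs).trans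
      (mul_le_mul_right (setLIntegral_enorm_sq_le_tsum hf (m - n)) _)
    have h2 : (2 : ℝ) * 2 ^ (m - 1) = 2 ^ m := by
      rw [zpow_sub₀ two_ne_zero, zpow_one]; field_simp
    rw [h2, ENNReal.ofReal_two_zpow] at h
    have hne0 : ((2 : ℝ≥0∞) ^ (m - 1)) ^ 2 ≠ 0 :=
      pow_ne_zero _ (ENNReal.zpow_pos (by norm_num) (by norm_num) _).ne'
    have hne : ((2 : ℝ≥0∞) ^ (m - 1)) ^ 2 ≠ ∞ :=
      ENNReal.pow_ne_top (ENNReal.zpow_ne_top (by norm_num) (by norm_num) _)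
    rw [← ENNReal.mul_le_mul_iff_right hne0 hne]
    refine h.trans_eq ?_
    rw [← ENNReal.tsum_mul_left, ← ENNReal.tsum_mul_left, ← ENNReal.tsum_mul_left]
    refine tsum_congr fun i ↦ ?_
    have e : (2 : ℝ≥0∞) ^ (m - n + i) = 2 ^ (m - 1) * 2 ^ (1 - (n : ℤ)) * 2 ^ i := by
      rw [← zpow_natCast, ← ENNReal.zpow_add (by norm_num) (by norm_num),
        ← ENNReal.zpow_add (by norm_num) (by norm_num)]
      congr 1
      ring
    rw [e, show m - n + (i : ℤ) = m + (i - n) by ring]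
    simp only [D]
    ring
  calc _ ≤ _ := tsum_lorentzNorm_rpow_le volume hq hqp _
    _ ≤ (K * ∑' m : ℤ, ((2 : ℝ≥0∞) ^ m) ^ q *
          (volume {x | (2 : ℝ) ^ m < ‖f x‖}) ^ (q / p)) ^ (1 / q) := by
        gcongr
        exact tsum_dyadic_rpow_le (ν := fun m ↦ volume {x | (2 : ℝ) ^ m < ‖f x‖}) hσ hσ1 hlam
    _ = K ^ (1 / q) * lorentzNorm volume p q f := ENNReal.mul_rpow_of_nonneg _ _ (by positivity)
    _ ≤ _ := by
        gcongr
        rw [ENNReal.le_ofReal_iff_toReal_le hKq (by positivity)]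
        linarith
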